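/- There exist constants C > 0 and n₀ such that the following holds. Let n ≥ n₀, let L be a positive integer with L < 0.5·n^{1/2}, let W = W(n, L), let S ⊆ Z_n be any set, and for u ∈ Z_n let N(u) denote the number of triples (s, t, w) ∈ S × S × W with s + t + w = u in Z_n. Then |N(u) − (#S)^{2} · #W / n| ≤ C · L · #S · (log n)^{2} / log log n. -/

import Mathlib

/-- The set `𝓛 = 𝓛(n, L)` of primes `ℓ` with `L < ℓ ≤ 2L` and `gcd(ℓ, n) = 1`. -/
def calL (n L : ℕ) : Finset ℕ :=
  (Finset.Ioc L (2 * L)).filter fun ℓ => Nat.Prime ℓ ∧ Nat.Coprime ℓ n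

/-- The set `W = W(n, L) = {k·ℓ⁻¹ mod n : 1 ≤ k ≤ L, ℓ ∈ 𝓛} ⊆ Z_n`. -/
def calW (n L : ℕ) : Finset (ZMod n) :=
  ((Finset.Icc 1 L) ×ˢ calL n L).image fun p => (p.1 : ZMod n) * (p.2 : ZMod n)⁻¹

/-!
Expand the count over the characters `ψ` of `ℤ/n`: the trivial character contributes the main
term, and by Cauchy–Schwarz and Parseval the others contribute at most `#S · max |∑_{w ∈ W} ψ w|`.

Since `2 L² < n`, the fractions `k/ℓ` defining `W` are distinct, so for `ψ x = e(a x / n)` the sum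
over `W` splits into geometric progressions of ratio `e(a ℓ⁻¹ / n)`, one for each `ℓ ∈ 𝓛`. Let `q_ℓ`
be `ℓ` times the distance from `a ℓ⁻¹` to `0` in `ℤ/n`. The `ℓ`-th progression has sum
`O(L / (1 + m))` with `m = ⌊q_ℓ / n⌋ ≤ L`. As `q_ℓ ≡ ±a` mod `n`, each `m` leaves only two possible
values of `q_ℓ`, both at most `n²`. The prime `ℓ` divides `q_ℓ`, so `m` occurs for
`O(log n / log log n)` primes, and the sum over `m` costs one further logarithm.
-/

section CharacterSums

open Finset

variable {G : Type*} [AddCommGroup G] [Fintype G]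

lemma sum_norm_sq_sum_addChar (A : Finset G) :
    ∑ ψ : AddChar G ℂ, ‖∑ a ∈ A, ψ a‖ ^ 2 = (Fintype.card G : ℝ) * #A := by
  classical
  have expand (ψ : AddChar G ℂ) :
      ((‖∑ a ∈ A, ψ a‖ ^ 2 : ℝ) : ℂ) = ∑ a ∈ A, ∑ b ∈ A, ψ (a - b) := by
    rw [Complex.ofReal_pow, ← Complex.mul_conj', map_sum, sum_mul_sum]
    simp only [← AddChar.map_neg_eq_conj, ← AddChar.map_add_eq_mul, sub_eq_add_neg]
  have diagonal (a : G) (ha : a ∈ A) :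
      ∑ b ∈ A, ∑ ψ : AddChar G ℂ, ψ (a - b) = Fintype.card G := by
    simp_rw [AddChar.sum_apply_eq_ite, sub_eq_zero]
    rw [sum_ite_eq, if_pos ha]
  rw [← Complex.ofReal_inj, Complex.ofReal_sum]
  simp_rw [expand]
  rw [sum_comm]
  simp_rw [sum_comm (s := univ)]
  rw [sum_congr rfl diagonal, sum_const, nsmul_eq_mul]
  push_cast
  ring

lemma sum_norm_sum_addChar_mul_le (A B : Finset G) :
    ∑ ψ : AddChar G ℂ, ‖∑ a ∈ A, ψ a‖ * ‖∑ b ∈ B, ψ b‖ ≤ Fintype.card G * √(#A * #B) := by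
  refine (Real.sum_mul_le_sqrt_mul_sqrt _ _ _).trans_eq ?_
  rw [sum_norm_sq_sum_addChar, sum_norm_sq_sum_addChar, ← Real.sqrt_mul (by positivity),
    mul_mul_mul_comm, Real.sqrt_mul (by positivity), Real.sqrt_mul_self (Nat.cast_nonneg _)]

variable [DecidableEq G]

lemma card_mul_card_filter_add_add_eq (A B C : Finset G) (u : G) :
    (Fintype.card G : ℂ) * #{p ∈ A ×ˢ B ×ˢ C | p.1 + p.2.1 + p.2.2 = u} =
      ∑ ψ : AddChar G ℂ, (∑ a ∈ A, ψ a) * (∑ b ∈ B, ψ b) * (∑ c ∈ C, ψ c) * ψ (-u) := by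
  have expand (ψ : AddChar G ℂ) :
      (∑ a ∈ A, ψ a) * (∑ b ∈ B, ψ b) * (∑ c ∈ C, ψ c) * ψ (-u) =
        ∑ p ∈ A ×ˢ B ×ˢ C, ψ (p.1 + p.2.1 + p.2.2 - u) := by
    simp only [sub_eq_add_neg, AddChar.map_add_eq_mul, sum_product, ← mul_sum, ← sum_mul,
      mul_assoc]
  simp_rw [expand]
  rw [sum_comm]
  simp_rw [AddChar.sum_apply_eq_ite, sub_eq_zero]
  rw [← sum_filter, sum_const, nsmul_eq_mul, mul_comm]

lemma abs_card_filter_add_add_sub_le (A B C : Finset G) (u : G) {M : ℝ} (hM₀ : 0 ≤ M)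
    (hM : ∀ ψ : AddChar G ℂ, ψ ≠ 0 → ‖∑ c ∈ C, ψ c‖ ≤ M) :
    |(#{p ∈ A ×ˢ B ×ˢ C | p.1 + p.2.1 + p.2.2 = u} : ℝ) - #A * #B * #C / Fintype.card G| ≤
      M * √(#A * #B) := by
  set N := #{p ∈ A ×ˢ B ×ˢ C | p.1 + p.2.1 + p.2.2 = u} with hN
  have hG : (0 : ℝ) < Fintype.card G := by exact_mod_cast Fintype.card_pos
  have deviation_eq : (((Fintype.card G : ℝ) * N - #A * #B * #C : ℝ) : ℂ) =
      ∑ ψ ∈ univ.erase (0 : AddChar G ℂ),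
        (∑ a ∈ A, ψ a) * (∑ b ∈ B, ψ b) * (∑ c ∈ C, ψ c) * ψ (-u) := by
    rw [sum_erase_eq_sub (mem_univ _), ← card_mul_card_filter_add_add_eq, ← hN]
    simp
  have deviation_le : |(Fintype.card G : ℝ) * N - #A * #B * #C| ≤
      M * (Fintype.card G * √(#A * #B)) := by
    calc |(Fintype.card G : ℝ) * N - #A * #B * #C|
        ≤ ∑ ψ ∈ univ.erase (0 : AddChar G ℂ),
            ‖(∑ a ∈ A, ψ a) * (∑ b ∈ B, ψ b) * (∑ c ∈ C, ψ c) * ψ (-u)‖ := by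
          rw [← Real.norm_eq_abs, ← Complex.norm_real, deviation_eq]
          exact norm_sum_le _ _
      _ ≤ ∑ ψ ∈ univ.erase (0 : AddChar G ℂ), M * (‖∑ a ∈ A, ψ a‖ * ‖∑ b ∈ B, ψ b‖) := by
          refine sum_le_sum fun ψ hψ ↦ ?_
          rw [norm_mul, norm_mul, norm_mul, AddChar.norm_apply, mul_one, mul_comm M]
          gcongr
          exact hM ψ (ne_of_mem_erase hψ)
      _ ≤ M * ∑ ψ : AddChar G ℂ, ‖∑ a ∈ A, ψ a‖ * ‖∑ b ∈ B, ψ b‖ := by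
          rw [mul_sum]
          exact sum_le_sum_of_subset_of_nonneg (erase_subset _ _) fun _ _ _ ↦ by positivity
      _ ≤ M * (Fintype.card G * √(#A * #B)) := by
          gcongr
          exact sum_norm_sum_addChar_mul_le A B
  have deviation_div : (N : ℝ) - #A * #B * #C / Fintype.card G =
      ((Fintype.card G : ℝ) * N - #A * #B * #C) / Fintype.card G := by field_simp
  rw [deviation_div, abs_div, abs_of_pos hG, div_le_iff₀ hG]
  exact deviation_le.trans_eq (by ring)

end CharacterSums

section PrimeFactorCount

open Finset
open scoped Nat

lemma factorial_card_le_prod_id {s : Finset ℕ} (hs : ∀ i ∈ s, 0 < i) : (#s)! ≤ ∏ i ∈ s, i := by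
  induction s using Finset.induction_on_max with
  | empty => simp
  | insert m s hlt ih =>
    have hm : m ∉ s := fun h ↦ (hlt m h).false
    have succ_card_le : #s + 1 ≤ m := by
      have hsub : s ⊆ Ioo 0 m := fun i hi ↦ mem_Ioo.2 ⟨hs i (mem_insert_of_mem hi), hlt i hi⟩
      have hcard : #s ≤ m - 0 - 1 := (card_le_card hsub).trans_eq (Nat.card_Ioo 0 m)
      have hm₀ : 0 < m := hs m (mem_insert_self m s)
      omega
    rw [card_insert_of_notMem hm, prod_insert hm, Nat.factorial_succ]
    exact Nat.mul_le_mul succ_card_le (ih fun i hi ↦ hs i (mem_insert_of_mem hi))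

lemma mul_log_sub_one_le_log_factorial (k : ℕ) : k * (Real.log k - 1) ≤ Real.log k ! := by
  rcases k.eq_zero_or_pos with rfl | hk
  · simp
  have hk' : (0 : ℝ) < k := by exact_mod_cast hk
  have h := Real.log_le_log (by positivity) (Real.pow_div_factorial_le_exp (k : ℝ) hk'.le k)
  rw [Real.log_div (by positivity) (by positivity), Real.log_pow, Real.log_exp] at h
  linarith

lemma mul_log_le_two_mul_of_mul_log_sub_one_le {k x : ℝ} (hk : 0 ≤ k) (hx : 0 ≤ x)
    (h : k * (Real.log k - 1) ≤ x) : k * Real.log x ≤ 2 * x := by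
  rcases hk.eq_or_lt with rfl | hk
  · simpa using hx
  rcases hx.eq_or_lt with rfl | hx
  · simp
  have hlogk : Real.log k - 1 ≤ x / k := by rwa [le_div_iff₀' hk]
  have hlogx : Real.log x ≤ 2 * (x / k) := by
    have := Real.log_le_sub_one_of_pos (div_pos hx hk)
    rw [Real.log_div hx.ne' hk.ne'] at this
    linarith
  calc k * Real.log x ≤ k * (2 * (x / k)) := by gcongr
    _ = 2 * x := by field_simp

lemma card_primeFactors_mul_log_le {z : ℕ} {x : ℝ} (hx : Real.log z ≤ x) :
    #z.primeFactors * Real.log x ≤ 2 * x := by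
  have hx₀ : 0 ≤ x := (Real.log_natCast_nonneg z).trans hx
  rcases eq_or_ne z 0 with rfl | hz
  · simpa using hx₀
  have factorial_le : (#z.primeFactors)! ≤ z :=
    (factorial_card_le_prod_id fun p hp ↦ Nat.pos_of_mem_primeFactors hp).trans
      (Nat.le_of_dvd (Nat.pos_of_ne_zero hz) z.prod_primeFactors_dvd)
  refine mul_log_le_two_mul_of_mul_log_sub_one_le (Nat.cast_nonneg _) hx₀ ?_
  calc (#z.primeFactors : ℝ) * (Real.log #z.primeFactors - 1)
      ≤ Real.log (#z.primeFactors)! := mul_log_sub_one_le_log_factorial _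
    _ ≤ Real.log z := Real.log_le_log (by positivity) (by exact_mod_cast factorial_le)
    _ ≤ x := hx

lemma one_lt_log_natCast {n : ℕ} (hn : 3 ≤ n) : 1 < Real.log n := by
  have hn' : (3 : ℝ) ≤ n := by exact_mod_cast hn
  rw [Real.lt_log_iff_exp_lt (by linarith)]
  exact Real.exp_one_lt_three.trans_le hn'

lemma card_primeFactors_le_of_le_sq {n z : ℕ} (hn : 3 ≤ n) (hz : z ≤ n ^ 2) :
    (#z.primeFactors : ℝ) ≤ 4 * Real.log n / Real.log (Real.log n) := by
  have hlog := one_lt_log_natCast hn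
  have log_z_le : Real.log z ≤ 2 * Real.log n := by
    rcases z.eq_zero_or_pos with rfl | hz₀
    · simp [Real.log_natCast_nonneg]
    · rw [← Nat.cast_ofNat (R := ℝ), ← Real.log_pow]
      exact Real.log_le_log (by positivity) (by exact_mod_cast hz)
  rw [le_div_iff₀ (Real.log_pos hlog)]
  calc (#z.primeFactors : ℝ) * Real.log (Real.log n)
      ≤ #z.primeFactors * Real.log (2 * Real.log n) := by gcongr; linarith
    _ ≤ 2 * (2 * Real.log n) := card_primeFactors_mul_log_le log_z_le
    _ = 4 * Real.log n := by ring

end PrimeFactorCount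

section GeometricSums

open Finset

lemma norm_sum_Icc_pow_le {K : Type*} [NormedField K] {q : K} (hq : ‖q‖ ≤ 1) (hq₁ : q ≠ 1)
    (L : ℕ) : ‖∑ k ∈ Icc 1 L, q ^ k‖ ≤ 2 / ‖q - 1‖ := by
  have hsum : ∑ k ∈ Icc 1 L, q ^ k = (q ^ (L + 1) - q) / (q - 1) := by
    rw [← Ico_add_one_right_eq_Icc, geom_sum_Ico hq₁ (by omega), pow_one]
  rw [hsum, norm_div]
  gcongr
  calc ‖q ^ (L + 1) - q‖ ≤ ‖q‖ ^ (L + 1) + ‖q‖ := by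
        rw [← norm_pow]
        exact norm_sub_le _ _
    _ ≤ 1 + 1 := add_le_add (pow_le_one₀ (norm_nonneg q) hq) hq
    _ = 2 := one_add_one_eq_two

variable {n : ℕ} [NeZero n]

lemma four_mul_natAbs_valMinAbs_div_le_norm_stdAddChar_sub_one (b : ZMod n) :
    4 * (b.valMinAbs.natAbs : ℝ) / n ≤ ‖ZMod.stdAddChar b - 1‖ := by
  have hn : (0 : ℝ) < n := by exact_mod_cast NeZero.pos n
  set v := b.valMinAbs with hv
  set θ : ℝ := Real.pi * v / n with hθ
  have abs_θ : |θ| = Real.pi * v.natAbs / n := by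
    rw [hθ, abs_div, abs_mul, abs_of_pos Real.pi_pos, abs_of_pos hn, Nat.cast_natAbs, Int.cast_abs]
  have abs_θ_le : |θ| ≤ Real.pi / 2 := by
    have hv_le : (v.natAbs : ℝ) * 2 ≤ n := by
      have := ZMod.natAbs_valMinAbs_le b
      exact_mod_cast (by omega : v.natAbs * 2 ≤ n)
    rw [abs_θ, div_le_div_iff₀ hn two_pos, mul_assoc]
    gcongr
  have norm_eq : ‖ZMod.stdAddChar b - 1‖ = 2 * |Real.sin θ| := by
    have : ZMod.stdAddChar b = Complex.exp (Complex.I * ((2 * θ : ℝ) : ℂ)) := by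
      rw [← ZMod.coe_valMinAbs b, ← hv, ZMod.stdAddChar_coe]
      congr 1
      push_cast [hθ]
      ring
    rw [this, Complex.norm_exp_I_mul_ofReal_sub_one, mul_div_cancel_left₀ θ two_ne_zero, norm_mul,
      Real.norm_ofNat, Real.norm_eq_abs]
  calc 4 * (v.natAbs : ℝ) / n = 2 * (2 / Real.pi * |θ|) := by
        rw [abs_θ]
        field_simp
        ring
    _ ≤ 2 * |Real.sin θ| := by gcongr; exact Real.mul_abs_le_abs_sin abs_θ_le
    _ = ‖ZMod.stdAddChar b - 1‖ := norm_eq.symm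

lemma norm_sum_Icc_stdAddChar_mul_le {b : ZMod n} (hb : b ≠ 0) (L : ℕ) :
    ‖∑ k ∈ Icc 1 L, ZMod.stdAddChar (b * (k : ZMod n))‖ ≤ n / (2 * b.valMinAbs.natAbs) := by
  have hn : (0 : ℝ) < n := by exact_mod_cast NeZero.pos n
  have hv : (0 : ℝ) < b.valMinAbs.natAbs := by simpa using hb
  have hq : ZMod.stdAddChar b ≠ 1 := by
    rwa [← AddChar.map_zero_eq_one (ZMod.stdAddChar (N := n)), ZMod.injective_stdAddChar.ne_iff]
  have hpow (k : ℕ) : ZMod.stdAddChar (b * (k : ZMod n)) = ZMod.stdAddChar b ^ k := by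
    rw [← AddChar.map_nsmul_eq_pow, nsmul_eq_mul, mul_comm]
  simp_rw [hpow]
  calc ‖∑ k ∈ Icc 1 L, ZMod.stdAddChar b ^ k‖ ≤ 2 / ‖ZMod.stdAddChar b - 1‖ :=
        norm_sum_Icc_pow_le (AddChar.norm_apply _ _).le hq L
    _ ≤ 2 / (4 * b.valMinAbs.natAbs / n) := by
        gcongr
        exact four_mul_natAbs_valMinAbs_div_le_norm_stdAddChar_sub_one b
    _ = n / (2 * b.valMinAbs.natAbs) := by
        field_simp
        norm_num

lemma exists_forall_eq_stdAddChar_mul (ψ : AddChar (ZMod n) ℂ) :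
    ∃ a : ZMod n, ∀ x, ψ x = ZMod.stdAddChar (a * x) := by
  have hinj := AddChar.to_mulShift_inj_of_isPrimitive (ZMod.isPrimitive_stdAddChar n)
  have hcard : Fintype.card (ZMod n) = Fintype.card (AddChar (ZMod n) ℂ) := AddChar.card_eq.symm
  obtain ⟨a, rfl⟩ := ((Fintype.bijective_iff_injective_and_card _).2 ⟨hinj, hcard⟩).surjective ψ
  exact ⟨a, fun x ↦ AddChar.mulShift_apply⟩

end GeometricSums

section FractionSet

open Finset

lemma sum_inv_add_one_le_mul_harmonic {ι : Type*} {s : Finset ι} {f : ι → ℕ} {N : ℕ} {K : ℝ}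
    (hf : ∀ i ∈ s, f i < N) (hK : ∀ m < N, (#{i ∈ s | f i = m} : ℝ) ≤ K) :
    ∑ i ∈ s, ((f i : ℝ) + 1)⁻¹ ≤ K * harmonic N := by
  calc ∑ i ∈ s, ((f i : ℝ) + 1)⁻¹
      = ∑ m ∈ range N, ∑ i ∈ s with f i = m, ((m : ℝ) + 1)⁻¹ := by
        rw [← sum_fiberwise_of_maps_to fun i hi ↦ mem_range.2 (hf i hi)]
        exact sum_congr rfl fun m _ ↦ sum_congr rfl fun i hi ↦ by rw [(mem_filter.1 hi).2]
    _ ≤ ∑ m ∈ range N, K * ((m : ℝ) + 1)⁻¹ := by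
        refine sum_le_sum fun m hm ↦ ?_
        rw [sum_const, nsmul_eq_mul]
        gcongr
        exact hK m (mem_range.1 hm)
    _ = K * harmonic N := by
        rw [harmonic, ← mul_sum]
        push_cast
        rfl

variable {n L : ℕ}

lemma mem_calL {ℓ : ℕ} :
    ℓ ∈ calL n L ↔ (L < ℓ ∧ ℓ ≤ 2 * L) ∧ ℓ.Prime ∧ ℓ.Coprime n := by
  rw [calL, mem_filter, mem_Ioc]

lemma injOn_natCast_mul_inv (hL : 2 * L ^ 2 < n) :
    Set.InjOn (fun p : ℕ × ℕ ↦ (p.1 : ZMod n) * (p.2 : ZMod n)⁻¹) (Icc 1 L ×ˢ calL n L) := by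
  rintro ⟨k, ℓ⟩ h ⟨k', ℓ'⟩ h' heq
  simp only [Set.mem_prod, mem_coe, mem_Icc, mem_calL] at h h' heq
  obtain ⟨⟨-, hk⟩, ⟨hLℓ, hℓ⟩, hp, hc⟩ := h
  obtain ⟨⟨hk₀', hk'⟩, ⟨hLℓ', hℓ'⟩, hp', hc'⟩ := h'
  have cross_zmod : ((k * ℓ' : ℕ) : ZMod n) = (k' * ℓ : ℕ) := by
    push_cast
    linear_combination (ℓ * ℓ' : ZMod n) * heq - k * ℓ' * ZMod.coe_mul_inv_eq_one ℓ hc +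
      k' * ℓ * ZMod.coe_mul_inv_eq_one ℓ' hc'
  have cross : k * ℓ' = k' * ℓ := by
    rw [ZMod.natCast_eq_natCast_iff] at cross_zmod
    exact cross_zmod.eq_of_lt_of_lt ((Nat.mul_le_mul hk hℓ').trans_lt (by linarith))
      ((Nat.mul_le_mul hk' hℓ).trans_lt (by linarith))
  have hℓ_eq : ℓ' = ℓ := by
    have hdvd : ℓ' ∣ k' * ℓ := ⟨k, by rw [← cross, mul_comm]⟩
    rcases hp'.dvd_mul.1 hdvd with h | h
    · have := Nat.le_of_dvd hk₀' h
      omega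
    · exact (Nat.prime_dvd_prime_iff_eq hp' hp).1 h
  subst hℓ_eq
  rw [Nat.eq_of_mul_eq_mul_right hp'.pos cross]

lemma sum_calW {M : Type*} [AddCommMonoid M] (hL : 2 * L ^ 2 < n) (f : ZMod n → M) :
    ∑ w ∈ calW n L, f w =
      ∑ ℓ ∈ calL n L, ∑ k ∈ Icc 1 L, f ((k : ZMod n) * (ℓ : ZMod n)⁻¹) := by
  rw [calW, sum_image (by exact_mod_cast injOn_natCast_mul_inv hL), sum_product_right]

/-- `ℓ` times the distance from `a ℓ⁻¹` to `0` in `ℤ/n`: a multiple of `ℓ` which is congruent to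
`a` or `-a` modulo `n`. Dropping the sign keeps it, and its quotient by `n`, in `ℕ`. -/
def absMultiple (a : ZMod n) (ℓ : ℕ) : ℕ :=
  ℓ * (a * (ℓ : ZMod n)⁻¹).valMinAbs.natAbs

lemma dvd_absMultiple (a : ZMod n) (ℓ : ℕ) : ℓ ∣ absMultiple a ℓ :=
  dvd_mul_right _ _

lemma natCast_absMultiple (a : ZMod n) {ℓ : ℕ} (hℓ : ℓ.Coprime n) :
    (absMultiple a ℓ : ZMod n) = a ∨ (absMultiple a ℓ : ZMod n) = -a := by
  have hcancel : (ℓ : ZMod n) * (a * (ℓ : ZMod n)⁻¹) = a := by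
    linear_combination a * ZMod.coe_mul_inv_eq_one ℓ hℓ
  rw [absMultiple, Nat.cast_mul]
  set b := a * (ℓ : ZMod n)⁻¹
  have hv : ((b.valMinAbs : ℤ) : ZMod n) = b := b.coe_valMinAbs
  rcases Int.natAbs_eq b.valMinAbs with h | h
  · rw [h, Int.cast_natCast] at hv
    exact .inl (by rw [hv, hcancel])
  · rw [h, Int.cast_neg, Int.cast_natCast] at hv
    exact .inr (by rw [← neg_eq_iff_eq_neg, ← mul_neg, hv, hcancel])

lemma absMultiple_mod (a : ZMod n) {ℓ : ℕ} (hℓ : ℓ.Coprime n) :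
    absMultiple a ℓ % n = a.val ∨ absMultiple a ℓ % n = (-a).val := by
  rw [← ZMod.val_natCast]
  exact (natCast_absMultiple a hℓ).imp (congrArg _) (congrArg _)

lemma absMultiple_ne_zero {a : ZMod n} (ha : a ≠ 0) {ℓ : ℕ} (hℓ : ℓ.Coprime n) :
    absMultiple a ℓ ≠ 0 := by
  intro h
  have := natCast_absMultiple a hℓ
  rw [h, Nat.cast_zero, zero_eq_neg] at this
  exact this.elim (ha ·.symm) ha

lemma filter_absMultiple_div_subset {a : ZMod n} (ha : a ≠ 0) (m : ℕ) :
    {ℓ ∈ calL n L | absMultiple a ℓ / n = m} ⊆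
      (n * m + a.val).primeFactors ∪ (n * m + (-a).val).primeFactors := by
  intro ℓ h
  obtain ⟨hℓ, rfl⟩ := mem_filter.1 h
  obtain ⟨-, hp, hc⟩ := mem_calL.1 hℓ
  have hmem : ℓ ∈ (absMultiple a ℓ).primeFactors :=
    Nat.mem_primeFactors.2 ⟨hp, dvd_absMultiple a ℓ, absMultiple_ne_zero ha hc⟩
  have hdiv := Nat.div_add_mod (absMultiple a ℓ) n
  rw [mem_union]
  exact (absMultiple_mod a hc).imp (fun h ↦ by rwa [← h, hdiv]) (fun h ↦ by rwa [← h, hdiv])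

lemma card_filter_absMultiple_div_le (hn : 3 ≤ n) {a : ZMod n} (ha : a ≠ 0) {m : ℕ}
    (hm : m < n) :
    (#{ℓ ∈ calL n L | absMultiple a ℓ / n = m} : ℝ) ≤
      8 * Real.log n / Real.log (Real.log n) := by
  have : NeZero n := ⟨by omega⟩
  have hbound (b : ZMod n) :
      (#(n * m + b.val).primeFactors : ℝ) ≤ 4 * Real.log n / Real.log (Real.log n) :=
    card_primeFactors_le_of_le_sq hn (by nlinarith [b.val_lt])
  calc (#{ℓ ∈ calL n L | absMultiple a ℓ / n = m} : ℝ)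
      ≤ #(n * m + a.val).primeFactors + #(n * m + (-a).val).primeFactors := by
        exact_mod_cast (card_le_card (filter_absMultiple_div_subset ha m)).trans
          (card_union_le _ _)
    _ ≤ 4 * Real.log n / Real.log (Real.log n) + 4 * Real.log n / Real.log (Real.log n) :=
        add_le_add (hbound a) (hbound (-a))
    _ = 8 * Real.log n / Real.log (Real.log n) := by ring

section NonzeroModulus

variable [NeZero n]

lemma absMultiple_div_le (a : ZMod n) {ℓ : ℕ} (hℓ : ℓ ≤ 2 * L) : absMultiple a ℓ / n ≤ L := by
  refine Nat.div_le_of_le_mul ?_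
  calc absMultiple a ℓ ≤ 2 * L * (n / 2) :=
        Nat.mul_le_mul hℓ (ZMod.natAbs_valMinAbs_le _)
    _ = L * (n / 2 * 2) := by ring
    _ ≤ n * L := by rw [mul_comm n]; exact Nat.mul_le_mul_left _ (Nat.div_mul_le_self n 2)

lemma norm_sum_Icc_stdAddChar_mul_inv_le (a : ZMod n) {ℓ : ℕ} (hℓ : ℓ ≤ 2 * L) :
    ‖∑ k ∈ Icc 1 L, ZMod.stdAddChar (a * ((k : ZMod n) * (ℓ : ZMod n)⁻¹))‖ ≤
      2 * L * (((absMultiple a ℓ / n : ℕ) : ℝ) + 1)⁻¹ := by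
  set m := absMultiple a ℓ / n with hm
  set b := a * (ℓ : ZMod n)⁻¹ with hb
  have hab (k : ℕ) : a * ((k : ZMod n) * (ℓ : ZMod n)⁻¹) = b * k := by rw [hb]; ring
  simp_rw [hab]
  rcases m.eq_zero_or_pos with hm₀ | hm₀
  · calc ‖∑ k ∈ Icc 1 L, ZMod.stdAddChar (b * (k : ZMod n))‖
        ≤ ∑ k ∈ Icc 1 L, ‖ZMod.stdAddChar (b * (k : ZMod n))‖ := norm_sum_le _ _
      _ = L := by simp
      _ ≤ 2 * L * ((m : ℝ) + 1)⁻¹ := by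
        rw [hm₀, Nat.cast_zero, zero_add, inv_one, mul_one]
        linarith [Nat.cast_nonneg (α := ℝ) L]
  · have hb₀ : b ≠ 0 := by
      intro h
      simp [hm, absMultiple, ← hb, h] at hm₀
    have hv : (0 : ℝ) < b.valMinAbs.natAbs := by simpa using hb₀
    have hm₁ : (1 : ℝ) ≤ m := by exact_mod_cast hm₀
    have hmul : (m : ℝ) * n ≤ 2 * L * b.valMinAbs.natAbs := by
      exact_mod_cast (Nat.div_mul_le_self _ n).trans (Nat.mul_le_mul_right _ hℓ)
    refine (norm_sum_Icc_stdAddChar_mul_le hb₀ L).trans ?_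
    rw [← div_eq_mul_inv, div_le_div_iff₀ (by positivity) (by positivity)]
    nlinarith [Nat.cast_nonneg (α := ℝ) n]

lemma norm_sum_calW_stdAddChar_mul_le (hn : 3 ≤ n) (hL : 2 * L ^ 2 < n) {a : ZMod n}
    (ha : a ≠ 0) :
    ‖∑ w ∈ calW n L, ZMod.stdAddChar (a * w)‖ ≤
      32 * L * Real.log n ^ 2 / Real.log (Real.log n) := by
  have hlog := one_lt_log_natCast hn
  have hloglog := Real.log_pos hlog
  have hLn : L < n := by nlinarith
  have hharmonic : (harmonic (L + 1) : ℝ) ≤ 2 * Real.log n := by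
    have : Real.log ((L + 1 : ℕ) : ℝ) ≤ Real.log n :=
      Real.log_le_log (by positivity) (by exact_mod_cast hLn)
    linarith [harmonic_le_one_add_log (L + 1)]
  rw [sum_calW hL]
  calc ‖∑ ℓ ∈ calL n L, ∑ k ∈ Icc 1 L, ZMod.stdAddChar (a * ((k : ZMod n) * (ℓ : ZMod n)⁻¹))‖
      ≤ ∑ ℓ ∈ calL n L, 2 * L * (((absMultiple a ℓ / n : ℕ) : ℝ) + 1)⁻¹ :=
        norm_sum_le_of_le _ fun ℓ hℓ ↦
          norm_sum_Icc_stdAddChar_mul_inv_le a (mem_calL.1 hℓ).1.2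
    _ ≤ 2 * L * (8 * Real.log n / Real.log (Real.log n) * harmonic (L + 1)) := by
        rw [← mul_sum]
        gcongr
        exact sum_inv_add_one_le_mul_harmonic
          (fun ℓ hℓ ↦ Nat.lt_succ_of_le (absMultiple_div_le a (mem_calL.1 hℓ).1.2))
          (fun m hm ↦ card_filter_absMultiple_div_le hn ha (by omega))
    _ ≤ 2 * L * (8 * Real.log n / Real.log (Real.log n) * (2 * Real.log n)) := by gcongr
    _ = 32 * L * Real.log n ^ 2 / Real.log (Real.log n) := by ring

end NonzeroModulus

lemma norm_sum_calW_addChar_le (hn : 3 ≤ n) (hL : 2 * L ^ 2 < n) {ψ : AddChar (ZMod n) ℂ}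
    (hψ : ψ ≠ 0) :
    ‖∑ w ∈ calW n L, ψ w‖ ≤ 32 * L * Real.log n ^ 2 / Real.log (Real.log n) := by
  have : NeZero n := ⟨by omega⟩
  obtain ⟨a, ha⟩ := exists_forall_eq_stdAddChar_mul ψ
  have ha₀ : a ≠ 0 := by
    rintro rfl
    exact hψ (DFunLike.ext _ _ fun x ↦ by simp [ha])
  simp_rw [ha]
  exact norm_sum_calW_stdAddChar_mul_le hn hL ha₀

theorem representation_count_asymptotic_general (hn : 3 ≤ n) (hL : 2 * L ^ 2 < n)
    (S T : Finset (ZMod n)) (u : ZMod n) :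
    |(#{p ∈ S ×ˢ T ×ˢ calW n L | p.1 + p.2.1 + p.2.2 = u} : ℝ) - #S * #T * #(calW n L) / n| ≤
      32 * L * √(#S * #T) * Real.log n ^ 2 / Real.log (Real.log n) := by
  have : NeZero n := ⟨by omega⟩
  have hloglog := Real.log_pos (one_lt_log_natCast hn)
  have h := abs_card_filter_add_add_sub_le S T (calW n L) u (by positivity)
    fun ψ hψ ↦ norm_sum_calW_addChar_le hn hL hψ
  rw [ZMod.card] at h
  exact h.trans_eq (by ring)

end FractionSet

/-- There exist `C > 0` and `n₀` such that for every `n ≥ n₀`, every positive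
integer `L < 0.5·n^{1/2}`, every `S ⊆ Z_n` and every `u ∈ Z_n`, the number `N(u)` of
triples `(s, t, w) ∈ S × S × W` with `s + t + w = u` satisfies
`|N(u) − (#S)² #W / n| ≤ C · L · #S · (log n)² / log log n`. -/
theorem representation_count_asymptotic :
    ∃ C : ℝ, C > 0 ∧ ∃ n₀ : ℕ, ∀ n : ℕ, n₀ ≤ n →
      ∀ L : ℕ, 0 < L → (L : ℝ) < 0.5 * Real.sqrt n →
        ∀ S : Finset (ZMod n), ∀ u : ZMod n,
          |((((S ×ˢ S ×ˢ calW n L).filter fun p => p.1 + p.2.1 + p.2.2 = u).card : ℝ)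
              - (S.card : ℝ) ^ 2 * ((calW n L).card : ℝ) / n)|
            ≤ C * L * S.card * (Real.log n) ^ 2 / Real.log (Real.log n) := by
  refine ⟨32, by norm_num, 3, fun n hn L _ hL S u ↦ ?_⟩
  have hL' : 2 * L ^ 2 < n := by
    have := Real.sq_sqrt (Nat.cast_nonneg (α := ℝ) n)
    exact_mod_cast (by nlinarith [Nat.cast_nonneg (α := ℝ) L] : 2 * (L : ℝ) ^ 2 < n)
  have h := representation_count_asymptotic_general hn hL' S S u
  rwa [Real.sqrt_mul_self (Nat.cast_nonneg _), ← sq] at h
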